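/- Let n ≥ 1 and p > n. There exist constants B = B(n,p) ≥ 1 and C = C(n,p) > 0 such that for every bounded domain Ω ⊂ ℝⁿ containing the origin, with D := B·diam(Ω), and for every u ∈ C_c^∞(Ω \ {0}) and all x, y ∈ Ω with x ≠ y, one has |u(x) − u(y)| · X^{1/p}(|x−y|/D) ≤ C · |x−y|^{1−n/p} · ( ∫_Ω |∇u|^p dz − ((p−n)/p)^p ∫_Ω |u(z)|^p / |z|^p dz )^{1/p}. -/

import Mathlib

open MeasureTheory Metric Set

/-!
For any radial function `G`, the field `z ↦ ‖z‖ ^ (-p) * G ‖z‖ * ‖u z‖ ^ p • z` has integral zero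
divergence, and by Young's inequality it calibrates the Hardy functional with constant `α ^ p`,
`α = (p - n) / p`, as soon as `G` satisfies a Riccati inequality. The constant `G = α ^ (p - 1)`
gives the Hardy inequality itself. Perturbing it by the logarithmic derivative of a weight that is
concave in `log s` and bends at `s = ‖x‖` leaves room for a multiple, of order
`1 / (1 - log (‖x‖ / D))`, of `‖∇u‖ ^ p + ‖u‖ ^ p / ‖z‖ ^ p` on the ball around `x` of radius
`‖x‖ / 2`, so the Hardy deficit controls the energy there. Morrey's estimate on balls turns this
into the bound for `‖x - y‖ ≤ ‖x‖ / 2`. Otherwise `‖x‖` and `‖y‖` are at most `2 * ‖x - y‖`, and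
`u x` and `u y` are bounded separately, since `r ^ (p - n) * (1 - log (r / D))` is increasing in
`r` up to a constant factor.
-/

lemma one_add_rpow_one_sub_le {p η : ℝ} (hp : 1 ≤ p) (hη0 : 0 ≤ η) (hη1 : η ≤ 1) :
    (1 + η) ^ (1 - p) ≤ 1 - (1 - 2 ^ (1 - p)) * η := by
  have htwo : (2 : ℝ) ^ η ≤ 1 + η := by
    have := rpow_one_add_le_one_add_mul_self (s := 1) (by norm_num) hη0 hη1
    norm_num at this
    exact this
  calc (1 + η) ^ (1 - p) ≤ ((2 : ℝ) ^ η) ^ (1 - p) :=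
        Real.rpow_le_rpow_of_nonpos (by positivity) htwo (by linarith)
    _ = (1 + (2 ^ (1 - p) - 1)) ^ η := by
        rw [← Real.rpow_mul zero_le_two, mul_comm, Real.rpow_mul zero_le_two, add_sub_cancel]
    _ ≤ 1 + η * (2 ^ (1 - p) - 1) :=
        rpow_one_add_le_one_add_mul_self (by linarith [Real.rpow_pos_of_pos zero_lt_two (1 - p)])
          hη0 hη1
    _ = 1 - (1 - 2 ^ (1 - p)) * η := by ring

lemma perturbed_young {p q a b η : ℝ} (hpq : p.HolderConjugate q) (ha : 0 ≤ a) (hb : 0 ≤ b)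
    (hη0 : 0 ≤ η) (hη1 : η ≤ 1) :
    p * (a * b) ≤ (1 - (1 - 2 ^ (1 - p)) * η) * a ^ p + (p - 1) * (1 + η) * b ^ q := by
  have hpos : 0 < 1 + η := by linarith
  have scaled_pow_p : (a * (1 + η) ^ (-(1 / q))) ^ p = a ^ p * (1 + η) ^ (1 - p) := by
    rw [Real.mul_rpow ha (by positivity), ← Real.rpow_mul hpos.le, neg_mul, one_div_mul_eq_div,
      hpq.div_conj_eq_sub_one, neg_sub]
  have scaled_pow_q : (b * (1 + η) ^ (1 / q)) ^ q = b ^ q * (1 + η) := by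
    rw [Real.mul_rpow hb (by positivity), ← Real.rpow_mul hpos.le,
      one_div_mul_cancel hpq.symm.ne_zero, Real.rpow_one]
  calc p * (a * b)
      = p * (a * (1 + η) ^ (-(1 / q)) * (b * (1 + η) ^ (1 / q))) := by
        rw [mul_mul_mul_comm a, ← Real.rpow_add hpos, neg_add_cancel, Real.rpow_zero, mul_one]
    _ ≤ p * (a ^ p * (1 + η) ^ (1 - p) / p + b ^ q * (1 + η) / q) := by
        rw [← scaled_pow_p, ← scaled_pow_q]
        exact mul_le_mul_of_nonneg_left
          (Real.young_inequality_of_nonneg (by positivity) (by positivity) hpq) hpq.nonneg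
    _ = (1 + η) ^ (1 - p) * a ^ p + (p - 1) * (1 + η) * b ^ q := by
        rw [mul_add, mul_div_cancel₀ _ hpq.ne_zero, ← hpq.div_conj_eq_sub_one]
        ring
    _ ≤ _ := by
        gcongr
        exact one_add_rpow_one_sub_le hpq.lt.le hη0 hη1

lemma rpow_tangent_le {q x y : ℝ} (hq : 1 ≤ q) (hx : 0 ≤ x) (hy : 0 < y) :
    y ^ q + q * y ^ (q - 1) * (x - y) ≤ x ^ q := by
  have hconv := one_add_mul_self_le_rpow_one_add (s := (x - y) / y) (p := q)
    (by rw [le_div_iff₀ hy]; linarith) hq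
  have hsplit : y ^ q = y ^ (q - 1) * y := by rw [← Real.rpow_add_one hy.ne', sub_add_cancel]
  calc y ^ q + q * y ^ (q - 1) * (x - y) = y ^ q * (1 + q * ((x - y) / y)) := by
        rw [hsplit]; field_simp
    _ ≤ y ^ q * (1 + (x - y) / y) ^ q := by gcongr
    _ = x ^ q := by
        rw [← Real.mul_rpow hy.le (by rw [one_add_div hy.ne']; ring_nf; positivity)]
        congr 1; field_simp; ring

lemma exists_rpow_le_tangent_add_sq {q a : ℝ} (hq : 1 ≤ q) (ha : 0 < a) (b : ℝ) :
    ∃ K, 0 < K ∧ ∀ ⦃x⦄, x ∈ Icc a b → ∀ ⦃y⦄, y ∈ Icc a b →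
      x ^ q ≤ y ^ q + q * y ^ (q - 1) * (x - y) + K * (x - y) ^ 2 := by
  have hsmooth : ContDiffOn ℝ 1 (fun t : ℝ => t ^ (q - 1)) (Icc a b) := fun t ht =>
    (Real.contDiffAt_rpow_const_of_ne (ha.trans_le ht.1).ne').contDiffWithinAt
  obtain ⟨K, hK⟩ := hsmooth.exists_lipschitzOnWith one_ne_zero (convex_Icc a b) isCompact_Icc
  refine ⟨q * (K + 1), by positivity, fun x hx y hy => ?_⟩
  have htangent := rpow_tangent_le hq (ha.trans_le hy.1).le (ha.trans_le hx.1)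
  have hlip : (x ^ (q - 1) - y ^ (q - 1)) * (x - y) ≤ K * (x - y) ^ 2 := by
    calc _ ≤ |x ^ (q - 1) - y ^ (q - 1)| * |x - y| := by
          rw [← abs_mul]; exact le_abs_self _
      _ ≤ K * |x - y| * |x - y| := by
          gcongr
          simpa [Real.dist_eq] using hK.dist_le_mul x hx y hy
      _ = K * (x - y) ^ 2 := by rw [mul_assoc, ← sq, sq_abs]
  nlinarith [sq_nonneg (x - y)]

lemma exists_conj_rpow_sub_le {p q α : ℝ} (hpq : p.HolderConjugate q) (hα : 0 < α) :
    ∃ δ, 0 < δ ∧ δ ≤ α ^ (p - 1) ∧ ∀ ⦃w : ℝ⦄, w ∈ Icc 0 1 →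
      (p - 1) * (α ^ (p - 1) - δ * w) ^ q ≤
        (p - 1) * α ^ p - p * α * (δ * w) + δ * w ^ 2 := by
  set β := α ^ (p - 1) with hβ_def
  have hβ : 0 < β := Real.rpow_pos_of_pos hα _
  have hp1 : 0 < p - 1 := hpq.sub_one_pos
  have hβq : β ^ q = α ^ p := by rw [hβ_def, ← Real.rpow_mul hα.le, hpq.sub_one_mul_conj]
  have hβq1 : β ^ (q - 1) = α := by
    rw [hβ_def, ← Real.rpow_mul hα.le, mul_sub_one, hpq.sub_one_mul_conj, sub_sub_cancel,
      Real.rpow_one]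
  obtain ⟨K, hK, htangent⟩ := exists_rpow_le_tangent_add_sq hpq.symm.lt.le (half_pos hβ) β
  set δ := min (β / 2) ((p - 1) * K)⁻¹
  have hδ : 0 < δ := lt_min (half_pos hβ) (by positivity)
  have hδβ : δ ≤ β / 2 := min_le_left _ _
  have hδK : (p - 1) * K * δ ≤ 1 := by
    rw [← le_inv_mul_iff₀ (by positivity), mul_one]
    exact min_le_right _ _
  refine ⟨δ, hδ, by linarith, fun w hw => ?_⟩
  have hδw : δ * w ≤ δ := mul_le_of_le_one_right hδ.le hw.2
  have hδw0 : 0 ≤ δ * w := mul_nonneg hδ.le hw.1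
  have hquad := htangent (x := β - δ * w) ⟨by linarith, by linarith⟩ (y := β)
    ⟨by linarith, le_rfl⟩
  rw [hβq, hβq1] at hquad
  calc (p - 1) * (β - δ * w) ^ q
      ≤ (p - 1) * (α ^ p + q * α * (β - δ * w - β) + K * (β - δ * w - β) ^ 2) := by gcongr
    _ = (p - 1) * α ^ p - (p - 1) * q * α * (δ * w) + (p - 1) * K * δ * (δ * w ^ 2) := by ring
    _ ≤ (p - 1) * α ^ p - p * α * (δ * w) + δ * w ^ 2 := by
      rw [hpq.sub_one_mul_conj]
      linarith [mul_le_of_le_one_left (by positivity : 0 ≤ δ * w ^ 2) hδK]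

lemma exists_riccati_constants {p q α : ℝ} (hpq : p.HolderConjugate q) (hα : 0 < α) :
    ∃ δ κ : ℝ, 0 < δ ∧ δ ≤ α ^ (p - 1) ∧ 0 < κ ∧ κ ≤ 1 ∧
      ∀ ⦃w e : ℝ⦄, w ∈ Icc 0 1 → e ∈ Icc 0 1 →
        α ^ p + κ * e + (p - 1) * (1 + κ * e) * (α ^ (p - 1) - δ * w) ^ q ≤
          p * α * (α ^ (p - 1) - δ * w) + δ * (w ^ 2 + e) := by
  obtain ⟨δ, hδ, hδα, hmain⟩ := exists_conj_rpow_sub_le hpq hα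
  have hp1 : 0 < p - 1 := hpq.sub_one_pos
  have hαpow : p * α * α ^ (p - 1) = p * α ^ p := by
    rw [mul_assoc, ← Real.rpow_one_add' hα.le (by simpa using hpq.ne_zero), add_sub_cancel]
  set κ := min 1 (δ / (1 + (p - 1) * α ^ p))
  have hκ : 0 < κ := lt_min one_pos (by positivity)
  have hκδ : κ * (1 + (p - 1) * α ^ p) ≤ δ := by
    rw [← le_div_iff₀ (by positivity)]
    exact min_le_right _ _
  refine ⟨δ, κ, hδ, hδα, hκ, min_le_left _ _, fun w e hw he => ?_⟩
  have hbound : (α ^ (p - 1) - δ * w) ^ q ≤ α ^ p := by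
    calc (α ^ (p - 1) - δ * w) ^ q ≤ (α ^ (p - 1)) ^ q :=
          Real.rpow_le_rpow (sub_nonneg.2 ((mul_le_of_le_one_right hδ.le hw.2).trans hδα))
            (sub_le_self _ (mul_nonneg hδ.le hw.1)) hpq.symm.nonneg
      _ = α ^ p := by rw [← Real.rpow_mul hα.le, hpq.sub_one_mul_conj]
  have hpert : κ * e * (1 + (p - 1) * (α ^ (p - 1) - δ * w) ^ q) ≤ δ * e := by
    have he0 := he.1
    calc κ * e * (1 + (p - 1) * (α ^ (p - 1) - δ * w) ^ q)
        ≤ κ * e * (1 + (p - 1) * α ^ p) := by gcongr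
      _ = κ * (1 + (p - 1) * α ^ p) * e := by ring
      _ ≤ δ * e := by gcongr
  linarith [hmain hw]

lemma energy_add_flux_le {p α A U s g g' d η : ℝ} (hp : 1 < p) (hA : 0 ≤ A) (hU : 0 ≤ U)
    (hs : 0 < s) (hg : 0 ≤ g) (hη0 : 0 ≤ η) (hη1 : η ≤ 1)
    (hriccati : α ^ p + η + (p - 1) * (1 + η) * g ^ p.conjExponent + s * g' ≤ p * α * g)
    (hd : d ≤ p * U ^ (p - 1) * (A * s)) :
    (1 - 2 ^ (1 - p)) * η * (A ^ p + U ^ p / s ^ p) +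
        (s ^ p)⁻¹ * ((s * g' - p * α * g) * U ^ p + g * d) ≤ A ^ p - α ^ p * (U ^ p / s ^ p) := by
  have hpq := Real.HolderConjugate.conjExponent hp
  have hyoung := perturbed_young hpq hA (by positivity : 0 ≤ g * (U / s) ^ (p - 1)) hη0 hη1
  have hpow : (g * (U / s) ^ (p - 1)) ^ p.conjExponent =
      g ^ p.conjExponent * (U ^ p / s ^ p) := by
    rw [Real.mul_rpow hg (by positivity), ← Real.rpow_mul (by positivity), hpq.sub_one_mul_conj,
      Real.div_rpow hU hs.le]
  have hflux : (s ^ p)⁻¹ * (g * d) ≤ p * (A * (g * (U / s) ^ (p - 1))) := by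
    calc (s ^ p)⁻¹ * (g * d) ≤ (s ^ p)⁻¹ * (g * (p * U ^ (p - 1) * (A * s))) := by gcongr
      _ = p * (A * (g * (U / s) ^ (p - 1))) := by
        rw [Real.div_rpow hU hs.le, Real.rpow_sub_one hs.ne']
        field_simp
  have hpert : (1 - 2 ^ (1 - p)) * η ≤ η :=
    mul_le_of_le_one_left hη0 (sub_le_self _ (by positivity))
  have hV : 0 ≤ U ^ p / s ^ p := by positivity
  have hsplit : (s ^ p)⁻¹ * ((s * g' - p * α * g) * U ^ p + g * d) =
      (s * g' - p * α * g) * (U ^ p / s ^ p) + (s ^ p)⁻¹ * (g * d) := by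
    ring
  rw [hpow] at hyoung
  rw [hsplit]
  linarith [mul_le_mul_of_nonneg_right hpert hV, mul_le_mul_of_nonneg_right hriccati hV]

/-- A weight which, as a function of `log s`, is concave and nearly affine away from `s = ρ`.
Minus its logarithmic derivative is `riccatiProfile`, by which the Hardy calibration is perturbed.
The normalization makes it at least `2` on `0 < s ≤ D` whenever `0 < ρ ≤ D`. -/
noncomputable def logWeight (D ρ s : ℝ) : ℝ :=
  2 * (1 + Real.log (2 * D)) - Real.log s - Real.log (s + ρ)

/-- The solution `w = -s h' / h` of the Riccati equation `s w' = w ^ 2 + e`, where `h` is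
`logWeight D ρ` and `e` is `riccatiForcing D ρ`. -/
noncomputable def riccatiProfile (D ρ s : ℝ) : ℝ :=
  (1 + s / (s + ρ)) / logWeight D ρ s

/-- The forcing term of the Riccati equation of `riccatiProfile`; it is concentrated around
`s = ρ`. -/
noncomputable def riccatiForcing (D ρ s : ℝ) : ℝ :=
  s * ρ / (s + ρ) ^ 2 / logWeight D ρ s

section RiccatiProfile

variable {D ρ s : ℝ}

lemma two_le_logWeight (hs : 0 < s) (hsD : s ≤ D) (hρ : 0 < ρ) (hρD : ρ ≤ D) :
    2 ≤ logWeight D ρ s := by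
  have hlog : Real.log s ≤ Real.log (2 * D) := Real.log_le_log hs (by linarith)
  have hlog' : Real.log (s + ρ) ≤ Real.log (2 * D) := Real.log_le_log (by linarith) (by linarith)
  unfold logWeight
  linarith

lemma logWeight_le (hD : 0 < D) (hρ : 0 < ρ) (hρD : ρ ≤ D) (hs : ρ / 2 ≤ s) :
    logWeight D ρ s ≤ 5 * (1 - Real.log (ρ / D)) := by
  have hlog : Real.log ρ - Real.log 2 ≤ Real.log s := by
    rw [← Real.log_div hρ.ne' two_ne_zero]
    exact Real.log_le_log (by positivity) hs
  have hlog' : Real.log ρ ≤ Real.log (s + ρ) := Real.log_le_log hρ (by linarith)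
  have hρD' : Real.log ρ ≤ Real.log D := Real.log_le_log hρ hρD
  rw [logWeight, Real.log_mul two_ne_zero hD.ne', Real.log_div hρ.ne' hD.ne']
  linarith [Real.log_two_lt_d9]

lemma hasDerivAt_riccatiProfile (hs : 0 < s) (hρ : 0 < ρ) (hh : logWeight D ρ s ≠ 0) :
    HasDerivAt (riccatiProfile D ρ) ((riccatiProfile D ρ s ^ 2 + riccatiForcing D ρ s) / s) s := by
  have hsρ : s + ρ ≠ 0 := by positivity
  have hadd : HasDerivAt (fun t : ℝ => t + ρ) 1 s := (hasDerivAt_id s).add_const ρ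
  have hdenom : HasDerivAt (logWeight D ρ) (-s⁻¹ - 1 / (s + ρ)) s :=
    ((Real.hasDerivAt_log hs.ne').const_sub (2 * (1 + Real.log (2 * D)))).sub (hadd.log hsρ)
  refine ((((hasDerivAt_id s).div hadd hsρ).const_add 1).div hdenom hh).congr_deriv ?_
  simp only [riccatiProfile, riccatiForcing, Pi.div_apply, id_eq]
  field_simp
  ring

lemma contDiffAt_riccatiProfile (hs : 0 < s) (hρ : 0 < ρ) (hh : logWeight D ρ s ≠ 0) :
    ContDiffAt ℝ 1 (riccatiProfile D ρ) s := by
  have hsρ : s + ρ ≠ 0 := by positivity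
  have hadd : ContDiffAt ℝ 1 (fun t : ℝ => t + ρ) s := contDiffAt_id.add contDiffAt_const
  exact (contDiffAt_const.add (contDiffAt_id.div hadd hsρ)).div
    ((contDiffAt_const.sub (contDiffAt_id.log hs.ne')).sub (hadd.log hsρ)) hh

lemma riccatiProfile_mem_Icc (hs : 0 < s) (hsD : s ≤ D) (hρ : 0 < ρ) (hρD : ρ ≤ D) :
    riccatiProfile D ρ s ∈ Icc 0 1 := by
  have hh := two_le_logWeight hs hsD hρ hρD
  have hfrac : s / (s + ρ) ≤ 1 := (div_le_one (by positivity)).2 (by linarith)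
  exact ⟨div_nonneg (by positivity) (by linarith), div_le_one_of_le₀ (by linarith) (by linarith)⟩

lemma riccatiForcing_mem_Icc (hs : 0 < s) (hsD : s ≤ D) (hρ : 0 < ρ) (hρD : ρ ≤ D) :
    riccatiForcing D ρ s ∈ Icc 0 1 := by
  have hh := two_le_logWeight hs hsD hρ hρD
  have hfrac : s * ρ / (s + ρ) ^ 2 ≤ 1 := (div_le_one (by positivity)).2 (by nlinarith)
  exact ⟨div_nonneg (by positivity) (by linarith), div_le_one_of_le₀ (by linarith) (by linarith)⟩

lemma le_riccatiForcing (hρ : 0 < ρ) (hρD : ρ ≤ D) (hs : ρ / 2 ≤ s) (hs' : s ≤ 3 * ρ / 2)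
    (hsD : s ≤ D) : 2 / 45 / (1 - Real.log (ρ / D)) ≤ riccatiForcing D ρ s := by
  have hs0 : 0 < s := by linarith
  have hfrac : 2 / 9 ≤ s * ρ / (s + ρ) ^ 2 := by
    rw [le_div_iff₀ (by positivity)]
    nlinarith [mul_nonneg (sub_nonneg.2 hs) (sub_nonneg.2 hs')]
  calc 2 / 45 / (1 - Real.log (ρ / D)) = 2 / 9 / (5 * (1 - Real.log (ρ / D))) := by
        rw [← div_div]; norm_num
    _ ≤ s * ρ / (s + ρ) ^ 2 / logWeight D ρ s := by
        have := two_le_logWeight hs0 hsD hρ hρD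
        gcongr
        exact logWeight_le (hρ.trans_le hρD) hρ hρD hs

end RiccatiProfile

section EulerField

variable {E : Type*} [NormedAddCommGroup E] [NormedSpace ℝ E]
  [MeasurableSpace E] [BorelSpace E] {μ : Measure E} [μ.IsAddHaarMeasure]

lemma integrable_fderiv_apply_self {φ : E → ℝ} (hφ : ContDiff ℝ 1 φ) (hc : HasCompactSupport φ) :
    Integrable (fun z => fderiv ℝ φ z z) μ := by
  have := hφ.continuous_fderiv one_ne_zero
  refine Continuous.integrable_of_hasCompactSupport (by fun_prop)
    ((hc.fderiv ℝ).mono fun z hz => ?_)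
  exact fun h => hz (by simp [h])

variable [FiniteDimensional ℝ E]

lemma integral_clm_mul_fderiv_apply (ℓ : E →L[ℝ] ℝ) (v : E) {φ : E → ℝ} (hφ : ContDiff ℝ 1 φ)
    (hc : HasCompactSupport φ) :
    ∫ z, ℓ z * fderiv ℝ φ z v ∂μ = -(ℓ v * ∫ z, φ z ∂μ) := by
  have hcont := hφ.continuous
  have := hφ.continuous_fderiv one_ne_zero
  rw [← integral_const_mul]
  simpa only [ContinuousLinearMap.fderiv] using
    integral_mul_fderiv_eq_neg_fderiv_mul_of_integrable (μ := μ) (f := ℓ) (g := φ) (v := v)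
      (by simpa using (hcont.integrable_of_hasCompactSupport hc).const_mul (ℓ v))
      (Continuous.integrable_of_hasCompactSupport (by fun_prop) (hc.fderiv_apply ℝ v).mul_left)
      (Continuous.integrable_of_hasCompactSupport (by fun_prop) hc.mul_left)
      (fun z _ => ℓ.differentiableAt)
      (fun z _ => (hφ.differentiable one_ne_zero).differentiableAt)

lemma integral_fderiv_apply_self {φ : E → ℝ} (hφ : ContDiff ℝ 1 φ) (hc : HasCompactSupport φ) :
    ∫ z, fderiv ℝ φ z z ∂μ = -(Module.finrank ℝ E * ∫ z, φ z ∂μ) := by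
  let b := Module.finBasis ℝ E
  let ℓ i : E →L[ℝ] ℝ := (b.coord i).toContinuousLinearMap
  have := hφ.continuous_fderiv one_ne_zero
  have hint i : Integrable (fun z => ℓ i z * fderiv ℝ φ z (b i)) μ :=
    Continuous.integrable_of_hasCompactSupport (by fun_prop) (hc.fderiv_apply ℝ (b i)).mul_left
  calc ∫ z, fderiv ℝ φ z z ∂μ = ∫ z, ∑ i, ℓ i z * fderiv ℝ φ z (b i) ∂μ := by
        refine integral_congr_ae (.of_forall fun z => ?_)
        simpa only [map_sum, map_smul, smul_eq_mul, ℓ, LinearMap.coe_toContinuousLinearMap',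
          Module.Basis.coord_apply] using congrArg (fderiv ℝ φ z) (b.sum_repr z).symm
    _ = ∑ i, -(ℓ i (b i) * ∫ z, φ z ∂μ) := by
        rw [integral_finsetSum _ fun i _ => hint i]
        simp only [integral_clm_mul_fderiv_apply _ _ hφ hc]
    _ = -(Module.finrank ℝ E * ∫ z, φ z ∂μ) := by simp [ℓ]

end EulerField

section Radial

variable {E : Type*} [NormedAddCommGroup E] [InnerProductSpace ℝ E]
  {p : ℝ} {G : ℝ → ℝ} {v : E → ℝ}

lemma contDiff_radial_mul {F : ℝ → ℝ} (hv : ContDiff ℝ 1 v) (hv0 : 0 ∉ tsupport v)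
    (hF : ∀ z ∈ tsupport v, ContDiffAt ℝ 1 F ‖z‖) : ContDiff ℝ 1 (fun z => F ‖z‖ * v z) := by
  refine contDiff_iff_contDiffAt.2 fun z => ?_
  by_cases hz : z ∈ tsupport v
  · exact ((hF z hz).comp z (contDiffAt_norm ℝ (ne_of_mem_of_not_mem hz hv0))).mul hv.contDiffAt
  · refine contDiffAt_const (c := 0) |>.congr_of_eventuallyEq ?_
    filter_upwards [notMem_tsupport_iff_eventuallyEq.1 hz] with y hy
    simp [hy]

lemma fderiv_radial_mul_apply_self {F : ℝ → ℝ} {z : E} (hz : z ≠ 0)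
    (hF : DifferentiableAt ℝ F ‖z‖) (hv : DifferentiableAt ℝ v z) :
    fderiv ℝ (fun z => F ‖z‖ * v z) z z =
      ‖z‖ * deriv F ‖z‖ * v z + F ‖z‖ * fderiv ℝ v z z := by
  have hnorm : DifferentiableAt ℝ (‖·‖) z := (contDiffAt_norm ℝ hz).differentiableAt one_ne_zero
  have hrad : HasFDerivAt (fun z : E => F ‖z‖) (deriv F ‖z‖ • fderiv ℝ (‖·‖) z) z :=
    hF.hasDerivAt.comp_hasFDerivAt z hnorm.hasFDerivAt
  rw [fderiv_fun_mul hrad.differentiableAt hv, hrad.fderiv]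
  simp only [add_apply, smul_apply, smul_eq_mul, hnorm.fderiv_norm_self]
  ring

/-- The divergence of the vector field `z ↦ ‖z‖ ^ (-p) * G ‖z‖ * v z • z`. -/
noncomputable def radialDivergence (p : ℝ) (G : ℝ → ℝ) (v : E → ℝ) (z : E) : ℝ :=
  (‖z‖ ^ p)⁻¹ * ((‖z‖ * deriv G ‖z‖ - (p - Module.finrank ℝ E) * G ‖z‖) * v z +
    G ‖z‖ * fderiv ℝ v z z)

lemma contDiff_norm_rpow_inv_mul_radial_mul (hv : ContDiff ℝ 1 v)
    (hv0 : 0 ∉ tsupport v) (hG : ∀ z ∈ tsupport v, ContDiffAt ℝ 1 G ‖z‖) :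
    ContDiff ℝ 1 fun z => (‖z‖ ^ p)⁻¹ * G ‖z‖ * v z := by
  refine contDiff_radial_mul (F := fun s => (s ^ p)⁻¹ * G s) hv hv0 fun z hz => ?_
  have hz0 : ‖z‖ ≠ 0 := norm_ne_zero_iff.2 (ne_of_mem_of_not_mem hz hv0)
  exact ((Real.contDiffAt_rpow_const_of_ne hz0).inv
    (Real.rpow_pos_of_pos ((norm_nonneg z).lt_of_ne' hz0) p).ne').mul (hG z hz)

lemma radialDivergence_of_notMem_tsupport {z : E} (hz : z ∉ tsupport v) :
    radialDivergence p G v z = 0 := by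
  have hv_zero := notMem_tsupport_iff_eventuallyEq.1 hz
  simp [radialDivergence, hv_zero.fderiv_eq, hv_zero.self_of_nhds]

lemma radialDivergence_eq (hv : ContDiff ℝ 1 v) (hv0 : 0 ∉ tsupport v)
    (hG : ∀ z ∈ tsupport v, ContDiffAt ℝ 1 G ‖z‖) (z : E) :
    radialDivergence p G v z = Module.finrank ℝ E * ((‖z‖ ^ p)⁻¹ * G ‖z‖ * v z) +
      fderiv ℝ (fun z => (‖z‖ ^ p)⁻¹ * G ‖z‖ * v z) z z := by
  by_cases hz : z ∈ tsupport v
  · have hz0 : z ≠ 0 := ne_of_mem_of_not_mem hz hv0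
    have hs : 0 < ‖z‖ := norm_pos_iff.2 hz0
    have hpow : HasDerivAt (fun s : ℝ => (s ^ p)⁻¹ * G s)
        (-(p * ‖z‖ ^ (p - 1)) / (‖z‖ ^ p) ^ 2 * G ‖z‖ + (‖z‖ ^ p)⁻¹ * deriv G ‖z‖) ‖z‖ :=
      ((Real.hasDerivAt_rpow_const (Or.inl hs.ne')).inv (by positivity)).mul
        ((hG z hz).differentiableAt one_ne_zero).hasDerivAt
    rw [fderiv_radial_mul_apply_self (F := fun s => (s ^ p)⁻¹ * G s) hz0 hpow.differentiableAt
      (hv.differentiable one_ne_zero z), hpow.deriv, radialDivergence, Real.rpow_sub_one hs.ne']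
    field_simp
    ring
  · have hv_zero := notMem_tsupport_iff_eventuallyEq.1 hz
    have hprod_zero : (fun z => (‖z‖ ^ p)⁻¹ * G ‖z‖ * v z) =ᶠ[nhds z] fun _ => 0 := by
      filter_upwards [hv_zero] with y hy
      simp [hy]
    simp [radialDivergence_of_notMem_tsupport hz, hprod_zero.fderiv_eq, hv_zero.self_of_nhds]

variable [MeasurableSpace E] [BorelSpace E] {μ : Measure E} [μ.IsAddHaarMeasure]

lemma integrable_radialDivergence (hv : ContDiff ℝ 1 v) (hc : HasCompactSupport v)
    (hv0 : 0 ∉ tsupport v) (hG : ∀ z ∈ tsupport v, ContDiffAt ℝ 1 G ‖z‖) :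
    Integrable (radialDivergence p G v) μ := by
  have hsmooth := contDiff_norm_rpow_inv_mul_radial_mul (p := p) hv hv0 hG
  rw [funext (radialDivergence_eq hv hv0 hG)]
  exact ((hsmooth.continuous.integrable_of_hasCompactSupport hc.mul_left).const_mul _).add
    (integrable_fderiv_apply_self hsmooth hc.mul_left)

variable [FiniteDimensional ℝ E]

lemma integral_radialDivergence (hv : ContDiff ℝ 1 v) (hc : HasCompactSupport v)
    (hv0 : 0 ∉ tsupport v) (hG : ∀ z ∈ tsupport v, ContDiffAt ℝ 1 G ‖z‖) :
    ∫ z, radialDivergence p G v z ∂μ = 0 := by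
  have hsmooth := contDiff_norm_rpow_inv_mul_radial_mul (p := p) hv hv0 hG
  simp only [radialDivergence_eq hv hv0 hG]
  rw [integral_add ((hsmooth.continuous.integrable_of_hasCompactSupport hc.mul_left).const_mul _)
      (integrable_fderiv_apply_self hsmooth hc.mul_left), integral_const_mul,
    integral_fderiv_apply_self hsmooth hc.mul_left, add_neg_cancel]

end Radial

section Energy

lemma tsupport_norm_rpow_subset {X F : Type*} [TopologicalSpace X] [NormedAddCommGroup F]
    {u : X → F} {p : ℝ} (hp : p ≠ 0) : tsupport (fun z => ‖u z‖ ^ p) ⊆ tsupport u :=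
  tsupport_comp_subset (g := fun y : F => ‖y‖ ^ p) (by simp [hp]) u

variable {E : Type*} [NormedAddCommGroup E] [NormedSpace ℝ E]
  {F : Type*} [NormedAddCommGroup F] [NormedSpace ℝ F] {p : ℝ} {u : E → F}

/-- The sum of the gradient and the potential density of the Hardy inequality for `u`. At `z = 0`
the potential term is `0`, by the convention for division by zero, if `p ≠ 0`. -/
noncomputable def energyDensity (p : ℝ) (u : E → F) (z : E) : ℝ :=
  ‖fderiv ℝ u z‖ ^ p + ‖u z‖ ^ p / ‖z‖ ^ p

lemma energyDensity_nonneg (u : E → F) (z : E) : 0 ≤ energyDensity p u z := by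
  unfold energyDensity
  positivity

lemma energyDensity_of_notMem_tsupport (hp : p ≠ 0) {z : E} (hz : z ∉ tsupport u) :
    energyDensity p u z = 0 := by
  have hu_zero := notMem_tsupport_iff_eventuallyEq.1 hz
  simp [energyDensity, hu_zero.fderiv_eq, hu_zero.self_of_nhds, hp]

lemma norm_le_norm_mul_energyDensity_rpow (hp : 0 < p) (hu0 : u 0 = 0) (z : E) :
    ‖u z‖ ≤ ‖z‖ * energyDensity p u z ^ (1 / p) := by
  rcases eq_or_ne z 0 with rfl | hz
  · simp [hu0]
  have hz_pos := norm_pos_iff.2 hz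
  calc ‖u z‖ = ‖z‖ * (‖u z‖ / ‖z‖) := (mul_div_cancel₀ _ hz_pos.ne').symm
    _ = ‖z‖ * (‖u z‖ ^ p / ‖z‖ ^ p) ^ (1 / p) := by
        rw [← Real.div_rpow (norm_nonneg _) (norm_nonneg _), one_div,
          Real.rpow_rpow_inv (by positivity) hp.ne']
    _ ≤ ‖z‖ * energyDensity p u z ^ (1 / p) := by
        have hle : ‖u z‖ ^ p / ‖z‖ ^ p ≤ energyDensity p u z :=
          le_add_of_nonneg_left (by positivity)
        gcongr

lemma continuous_norm_fderiv_rpow (hp : 0 ≤ p) (hu : ContDiff ℝ 1 u) :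
    Continuous fun z => ‖fderiv ℝ u z‖ ^ p :=
  (hu.continuous_fderiv one_ne_zero).norm.rpow_const fun _ => Or.inr hp

variable [MeasurableSpace E]

/-- The difference of the two sides of the sharp `L ^ p` Hardy inequality for `u`, where `p`
exceeds the dimension. -/
noncomputable def hardyDeficit (p : ℝ) (μ : Measure E) (u : E → F) : ℝ :=
  ∫ z, ‖fderiv ℝ u z‖ ^ p ∂μ -
    ((p - Module.finrank ℝ E) / p) ^ p * ∫ z, ‖u z‖ ^ p / ‖z‖ ^ p ∂μ

lemma integrable_norm_fderiv_rpow [BorelSpace E] {μ : Measure E} [IsFiniteMeasureOnCompacts μ]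
    (hp : 0 < p) (hu : ContDiff ℝ 1 u) (hc : HasCompactSupport u) :
    Integrable (fun z => ‖fderiv ℝ u z‖ ^ p) μ :=
  (continuous_norm_fderiv_rpow hp.le hu).integrable_of_hasCompactSupport
    ((hc.fderiv ℝ).comp_left (g := fun y => ‖y‖ ^ p) (by simp [hp.ne']))

end Energy

section Hardy

variable {E : Type*} [NormedAddCommGroup E] [InnerProductSpace ℝ E]
  {F : Type*} [NormedAddCommGroup F] [InnerProductSpace ℝ F] {p : ℝ} {G η : ℝ → ℝ} {u : E → F}

lemma continuous_norm_rpow_div (hp : 1 < p) (hu : ContDiff ℝ 1 u)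
    (hu0 : 0 ∉ tsupport u) : Continuous fun z => ‖u z‖ ^ p / ‖z‖ ^ p := by
  have hsub := tsupport_norm_rpow_subset (u := u) (p := p) (by positivity)
  simpa [div_eq_inv_mul] using (contDiff_norm_rpow_inv_mul_radial_mul (G := 1) (p := p)
    (hu.norm_rpow hp) (fun h => hu0 (hsub h)) fun _ _ => contDiffAt_const).continuous

lemma continuous_energyDensity (hp : 1 < p) (hu : ContDiff ℝ 1 u)
    (hu0 : 0 ∉ tsupport u) : Continuous (energyDensity p u) :=
  (continuous_norm_fderiv_rpow (by positivity) hu).add (continuous_norm_rpow_div hp hu hu0)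

/-- At radius `s`, the radial coefficient `G` solves the Riccati inequality which makes
`radialDivergence p G` calibrate the Hardy functional with constant `α ^ p`, with room for `η`
times the energy density. -/
structure IsRiccatiSubsolutionAt (p α : ℝ) (G η : ℝ → ℝ) (s : ℝ) : Prop where
  contDiffAt : ContDiffAt ℝ 1 G s
  nonneg : 0 ≤ G s
  perturb_nonneg : 0 ≤ η s
  perturb_le_one : η s ≤ 1
  riccati_le : α ^ p + η s + (p - 1) * (1 + η s) * G s ^ p.conjExponent + s * deriv G s ≤
    p * α * G s

lemma energyDensity_add_radialDivergence_le (hp : 1 < p) (hu : ContDiff ℝ 1 u) {z : E}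
    (hz : z ≠ 0)
    (hG : IsRiccatiSubsolutionAt p ((p - Module.finrank ℝ E) / p) G η ‖z‖) :
    (1 - 2 ^ (1 - p)) * η ‖z‖ * energyDensity p u z +
        radialDivergence p G (fun z => ‖u z‖ ^ p) z ≤
      ‖fderiv ℝ u z‖ ^ p - ((p - Module.finrank ℝ E) / p) ^ p * (‖u z‖ ^ p / ‖z‖ ^ p) := by
  have hdim : p - Module.finrank ℝ E = p * ((p - Module.finrank ℝ E) / p) := by
    rw [mul_div_cancel₀ _ (by positivity)]
  have hderiv : fderiv ℝ (fun z => ‖u z‖ ^ p) z z ≤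
      p * ‖u z‖ ^ (p - 1) * (‖fderiv ℝ u z‖ * ‖z‖) := by
    calc fderiv ℝ (fun z => ‖u z‖ ^ p) z z ≤ ‖fderiv ℝ (fun z => ‖u z‖ ^ p) z‖ * ‖z‖ :=
          (Real.le_norm_self _).trans (ContinuousLinearMap.le_opNorm _ z)
      _ ≤ p * ‖u z‖ ^ (p - 1) * ‖fderiv ℝ u z‖ * ‖z‖ := by
          gcongr
          exact norm_fderiv_norm_rpow_le (hu.differentiable one_ne_zero) hp
      _ = p * ‖u z‖ ^ (p - 1) * (‖fderiv ℝ u z‖ * ‖z‖) := mul_assoc _ _ _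
  have hpointwise := energy_add_flux_le hp (norm_nonneg (fderiv ℝ u z)) (norm_nonneg (u z))
    (norm_pos_iff.2 hz) hG.nonneg hG.perturb_nonneg hG.perturb_le_one hG.riccati_le hderiv
  rwa [← hdim] at hpointwise

lemma indicator_energyDensity_add_radialDivergence_le (hp : 1 < p) (hu : ContDiff ℝ 1 u)
    (hu0 : 0 ∉ tsupport u)
    (hG : ∀ z ∈ tsupport u, IsRiccatiSubsolutionAt p ((p - Module.finrank ℝ E) / p) G η ‖z‖)
    {S : Set E} {k : ℝ} (hk : ∀ z ∈ S ∩ tsupport u, k ≤ η ‖z‖) (z : E) :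
    S.indicator (fun z => (1 - 2 ^ (1 - p)) * k * energyDensity p u z) z +
        radialDivergence p G (fun z => ‖u z‖ ^ p) z ≤
      ‖fderiv ℝ u z‖ ^ p - ((p - Module.finrank ℝ E) / p) ^ p * (‖u z‖ ^ p / ‖z‖ ^ p) := by
  have hp0 : p ≠ 0 := by positivity
  have hc0 : 0 ≤ 1 - (2 : ℝ) ^ (1 - p) :=
    sub_nonneg.2 (Real.rpow_le_one_of_one_le_of_nonpos one_le_two (by linarith))
  by_cases hz : z ∈ tsupport u
  · refine le_trans ?_ (energyDensity_add_radialDivergence_le hp hu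
      (ne_of_mem_of_not_mem hz hu0) (hG z hz))
    gcongr
    have henergy := energyDensity_nonneg (p := p) u z
    have hη := (hG z hz).perturb_nonneg
    refine indicator_apply_le' (fun hzS => ?_) fun _ => by positivity
    gcongr
    exact hk z ⟨hzS, hz⟩
  · have hu_zero := notMem_tsupport_iff_eventuallyEq.1 hz
    rw [radialDivergence_of_notMem_tsupport fun h => hz (tsupport_norm_rpow_subset hp0 h)]
    simp [energyDensity_of_notMem_tsupport hp0 hz, hu_zero.fderiv_eq, hu_zero.self_of_nhds, hp0,
      indicator]

variable [MeasurableSpace E] [BorelSpace E] {μ : Measure E}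

lemma integrable_norm_rpow_div [IsFiniteMeasureOnCompacts μ] (hp : 1 < p)
    (hu : ContDiff ℝ 1 u) (hc : HasCompactSupport u) (hu0 : 0 ∉ tsupport u) :
    Integrable (fun z => ‖u z‖ ^ p / ‖z‖ ^ p) μ := by
  have hp0 : p ≠ 0 := by positivity
  refine (continuous_norm_rpow_div hp hu hu0).integrable_of_hasCompactSupport
    (hc.mono fun z hz h => hz ?_)
  simp [h, hp0]

variable [FiniteDimensional ℝ E] [μ.IsAddHaarMeasure]

lemma setIntegral_energyDensity_le_hardyDeficit (hp : 1 < p) (hu : ContDiff ℝ 1 u)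
    (hc : HasCompactSupport u) (hu0 : 0 ∉ tsupport u)
    (hG : ∀ z ∈ tsupport u, IsRiccatiSubsolutionAt p ((p - Module.finrank ℝ E) / p) G η ‖z‖)
    {S : Set E} (hS : MeasurableSet S) {k : ℝ} (hk : ∀ z ∈ S ∩ tsupport u, k ≤ η ‖z‖) :
    (1 - 2 ^ (1 - p)) * k * ∫ z in S, energyDensity p u z ∂μ ≤ hardyDeficit p μ u := by
  have hsub := tsupport_norm_rpow_subset (u := u) (p := p) (by positivity)
  have hv : ContDiff ℝ 1 fun z => ‖u z‖ ^ p := hu.norm_rpow hp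
  have hvc : HasCompactSupport fun z => ‖u z‖ ^ p := hc.of_isClosed_subset isClosed_closure hsub
  have hv0 : 0 ∉ tsupport fun z => ‖u z‖ ^ p := fun h => hu0 (hsub h)
  have hvG : ∀ z ∈ tsupport fun z => ‖u z‖ ^ p, ContDiffAt ℝ 1 G ‖z‖ :=
    fun z hz => (hG z (hsub hz)).contDiffAt
  have hgrad := integrable_norm_fderiv_rpow (μ := μ) (one_pos.trans hp) hu hc
  have hpot := integrable_norm_rpow_div (μ := μ) hp hu hc hu0
  have henergy : Integrable (S.indicator fun z => (1 - 2 ^ (1 - p)) * k * energyDensity p u z) μ :=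
    ((hgrad.add hpot).const_mul _).indicator hS
  have hdiv := integrable_radialDivergence (p := p) (μ := μ) hv hvc hv0 hvG
  calc (1 - 2 ^ (1 - p)) * k * ∫ z in S, energyDensity p u z ∂μ
      = ∫ z, (S.indicator (fun z => (1 - 2 ^ (1 - p)) * k * energyDensity p u z) z +
          radialDivergence p G (fun z => ‖u z‖ ^ p) z) ∂μ := by
        rw [integral_add henergy hdiv, integral_radialDivergence hv hvc hv0 hvG, add_zero,
          integral_indicator hS, integral_const_mul]
    _ ≤ ∫ z, (‖fderiv ℝ u z‖ ^ p -
          ((p - Module.finrank ℝ E) / p) ^ p * (‖u z‖ ^ p / ‖z‖ ^ p)) ∂μ :=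
        integral_mono (henergy.add hdiv) (hgrad.sub (hpot.const_mul _))
          (indicator_energyDensity_add_radialDivergence_le hp hu hu0 hG hk)
    _ = hardyDeficit p μ u := by
        rw [integral_sub hgrad (hpot.const_mul _), integral_const_mul, hardyDeficit]

end Hardy

section LocalHardy

lemma isRiccatiSubsolutionAt_const {p α s : ℝ} (hp : 1 < p) (hα : 0 < α) :
    IsRiccatiSubsolutionAt p α (fun _ => α ^ (p - 1)) 0 s where
  contDiffAt := contDiffAt_const
  nonneg := by positivity
  perturb_nonneg := le_rfl
  perturb_le_one := zero_le_one
  riccati_le := by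
    have hp0 : 1 + (p - 1) ≠ 0 := by linarith
    simp only [Pi.zero_apply, deriv_const, mul_zero, add_zero, mul_one]
    rw [← Real.rpow_mul hα.le, (Real.HolderConjugate.conjExponent hp).sub_one_mul_conj, mul_assoc,
      ← Real.rpow_one_add' hα.le hp0, add_sub_cancel]
    linarith

lemma exists_isRiccatiSubsolutionAt_riccatiProfile {p α : ℝ} (hp : 1 < p) (hα : 0 < α) :
    ∃ δ κ : ℝ, 0 < κ ∧ ∀ ⦃D ρ s : ℝ⦄, 0 < s → s ≤ D → 0 < ρ → ρ ≤ D →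
      IsRiccatiSubsolutionAt p α (fun t => α ^ (p - 1) - δ * riccatiProfile D ρ t)
        (fun t => κ * riccatiForcing D ρ t) s := by
  obtain ⟨δ, κ, hδ, hδα, hκ, hκ1, hriccati⟩ :=
    exists_riccati_constants (Real.HolderConjugate.conjExponent hp) hα
  refine ⟨δ, κ, hκ, fun D ρ s hs hsD hρ hρD => ?_⟩
  have hh : logWeight D ρ s ≠ 0 := (two_pos.trans_le (two_le_logWeight hs hsD hρ hρD)).ne'
  have hw := riccatiProfile_mem_Icc hs hsD hρ hρD
  have he := riccatiForcing_mem_Icc hs hsD hρ hρD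
  refine ⟨contDiffAt_const.sub (contDiffAt_const.mul (contDiffAt_riccatiProfile hs hρ hh)),
    sub_nonneg.2 ((mul_le_of_le_one_right hδ.le hw.2).trans hδα), mul_nonneg hκ.le he.1,
    mul_le_one₀ hκ1 he.1 he.2, ?_⟩
  rw [(((hasDerivAt_riccatiProfile hs hρ hh).const_mul δ).const_sub _).deriv]
  have hderiv : s * -(δ * ((riccatiProfile D ρ s ^ 2 + riccatiForcing D ρ s) / s)) =
      -(δ * (riccatiProfile D ρ s ^ 2 + riccatiForcing D ρ s)) := by
    field_simp
  rw [hderiv]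
  linarith [hriccati hw he]

lemma one_le_one_sub_log_div {r D : ℝ} (hr : 0 < r) (hrD : r ≤ D) :
    1 ≤ 1 - Real.log (r / D) := by
  have hD := hr.trans_le hrD
  linarith [Real.log_nonpos (by positivity) ((div_le_one hD).2 hrD)]

variable {E F : Type*} [NormedAddCommGroup E] [InnerProductSpace ℝ E] [FiniteDimensional ℝ E]
  [MeasurableSpace E] [BorelSpace E] (μ : Measure E) [μ.IsAddHaarMeasure]
  [NormedAddCommGroup F] [InnerProductSpace ℝ F] {p : ℝ}

theorem hardyDeficit_nonneg (hp : 1 < p) (hdim : Module.finrank ℝ E < p) {u : E → F}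
    (hu : ContDiff ℝ 1 u) (hc : HasCompactSupport u) (hu0 : 0 ∉ tsupport u) :
    0 ≤ hardyDeficit p μ u := by
  have hα : 0 < (p - Module.finrank ℝ E) / p := div_pos (sub_pos.2 hdim) (by positivity)
  simpa using setIntegral_energyDensity_le_hardyDeficit (μ := μ) hp hu hc hu0
    (fun z _ => isRiccatiSubsolutionAt_const hp hα) MeasurableSet.univ (k := 0) fun _ _ => le_rfl

variable (F) in
theorem exists_setIntegral_energyDensity_le (hp : 1 < p) (hdim : Module.finrank ℝ E < p) :
    ∃ C : ℝ, 0 < C ∧ ∀ ⦃u : E → F⦄ ⦃D : ℝ⦄, ContDiff ℝ 1 u →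
      0 ∉ tsupport u → tsupport u ⊆ closedBall 0 D → ∀ ⦃x : E⦄, x ≠ 0 → ‖x‖ ≤ D →
        ∫ z in closedBall x (‖x‖ / 2), energyDensity p u z ∂μ ≤
          C * (1 - Real.log (‖x‖ / D)) * hardyDeficit p μ u := by
  have hα : 0 < (p - Module.finrank ℝ E) / p := div_pos (sub_pos.2 hdim) (by positivity)
  obtain ⟨δ, κ, hκ, hsub⟩ := exists_isRiccatiSubsolutionAt_riccatiProfile hp hα
  have hc : 0 < 1 - (2 : ℝ) ^ (1 - p) :=
    sub_pos.2 (Real.rpow_lt_one_of_one_lt_of_neg one_lt_two (by linarith))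
  refine ⟨((1 - 2 ^ (1 - p)) * (κ * (2 / 45)))⁻¹, by positivity,
    fun u D hu hu0 huD x hx hxD => ?_⟩
  have huc : HasCompactSupport u :=
    .of_support_subset_isCompact (isCompact_closedBall 0 D) ((subset_tsupport u).trans huD)
  have hρ : 0 < ‖x‖ := norm_pos_iff.2 hx
  have hT : 0 < 1 - Real.log (‖x‖ / D) := one_pos.trans_le (one_le_one_sub_log_div hρ hxD)
  have hD : ∀ z ∈ tsupport u, ‖z‖ ≤ D := fun z hz => mem_closedBall_zero_iff.1 (huD hz)
  have hforcing : ∀ z ∈ closedBall x (‖x‖ / 2) ∩ tsupport u,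
      κ * (2 / 45 / (1 - Real.log (‖x‖ / D))) ≤ κ * riccatiForcing D ‖x‖ ‖z‖ := by
    rintro z ⟨hzx, hz⟩
    have hdist := abs_le.1 ((abs_norm_sub_norm_le z x).trans (mem_closedBall_iff_norm.1 hzx))
    gcongr
    exact le_riccatiForcing hρ hxD (by linarith) (by linarith) (hD z hz)
  have hlocal := setIntegral_energyDensity_le_hardyDeficit (μ := μ) hp hu huc hu0
    (fun z hz => hsub (norm_pos_iff.2 (ne_of_mem_of_not_mem hz hu0)) (hD z hz) hρ hxD)
    measurableSet_closedBall hforcing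
  rw [mul_assoc, inv_mul_eq_div, le_div_iff₀ (by positivity), ← div_le_iff₀' hT]
  refine le_of_eq_of_le ?_ hlocal
  ring

end LocalHardy

section Morrey

lemma setAverage_mono_on {X : Type*} [MeasurableSpace X] {μ : Measure X} {S : Set X}
    {f g : X → ℝ} (hf : IntegrableOn f S μ) (hg : IntegrableOn g S μ) (hS : MeasurableSet S)
    (hfg : ∀ z ∈ S, f z ≤ g z) : ⨍ z in S, f z ∂μ ≤ ⨍ z in S, g z ∂μ := by
  simp only [setAverage_eq, smul_eq_mul]
  gcongr ?_ * ?_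
  exact setIntegral_mono_on hf hg hS hfg

lemma setAverage_le_setAverage_rpow {X : Type*} [MeasurableSpace X] {μ : Measure X} {S : Set X}
    {f : X → ℝ} {p : ℝ} (hp : 1 ≤ p) (hS0 : μ S ≠ 0) (hS : μ S ≠ ⊤) (hf0 : ∀ z, 0 ≤ f z)
    (hf : IntegrableOn f S μ) (hfp : IntegrableOn (fun z => f z ^ p) S μ) :
    ⨍ z in S, f z ∂μ ≤ (⨍ z in S, f z ^ p ∂μ) ^ (1 / p) := by
  have hp0 : 0 < p := by positivity
  have hjensen : (⨍ z in S, f z ∂μ) ^ p ≤ ⨍ z in S, f z ^ p ∂μ :=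
    (convexOn_rpow hp).map_set_average_le (continuousOn_id.rpow_const fun _ _ => Or.inr hp0.le)
      isClosed_Ici hS0 hS (.of_forall hf0) hf hfp
  have havg : 0 ≤ ⨍ z in S, f z ∂μ := integral_nonneg hf0
  calc ⨍ z in S, f z ∂μ = ((⨍ z in S, f z ∂μ) ^ p) ^ (1 / p) := by
        rw [one_div, Real.rpow_rpow_inv havg hp0.ne']
    _ ≤ _ := Real.rpow_le_rpow (by positivity) hjensen (by positivity)

variable {E : Type*} [NormedAddCommGroup E] [NormedSpace ℝ E]
  {F : Type*} [NormedAddCommGroup F] [NormedSpace ℝ F] {u : E → F} {W : Set E} {a : E}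

lemma norm_sub_le_mul_integral_norm_fderiv (hu : ContDiff ℝ 1 u) {d : ℝ} {z : E}
    (hd : ‖z - a‖ ≤ d) :
    ‖u z - u a‖ ≤ d * ∫ t in Ioc (0 : ℝ) 1, ‖fderiv ℝ u (a + t • (z - a))‖ := by
  have := hu.continuous_fderiv one_ne_zero
  have hderiv (t : ℝ) : HasDerivAt (fun t : ℝ => u (a + t • (z - a)))
      (fderiv ℝ u (a + t • (z - a)) (z - a)) t := by
    have hline : HasDerivAt (fun t : ℝ => a + t • (z - a)) (z - a) t := by
      simpa using ((hasDerivAt_id t).smul_const (z - a)).const_add a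
    exact (hu.differentiable one_ne_zero _).hasFDerivAt.comp_hasDerivAt t hline
  have hint : IntervalIntegrable (fun t : ℝ => d * ‖fderiv ℝ u (a + t • (z - a))‖) volume 0 1 :=
    (by fun_prop : Continuous fun t : ℝ => d * ‖fderiv ℝ u (a + t • (z - a))‖).intervalIntegrable
      0 1
  rw [← integral_const_mul, ← intervalIntegral.integral_of_le zero_le_one]
  have hmvt := norm_sub_le_integral_of_norm_deriv_le_of_le zero_le_one
    (fun t _ => (hderiv t).continuousAt.continuousWithinAt)
    (fun t _ => (hderiv t).differentiableAt.differentiableWithinAt)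
    (.of_forall fun t _ => ?_) hint
  · simpa only [one_smul, zero_smul, add_zero, add_sub_cancel] using hmvt
  · rw [(hderiv t).deriv, mul_comm]
    exact (ContinuousLinearMap.le_opNorm _ _).trans (by gcongr)

variable [MeasurableSpace E] [BorelSpace E] [FiniteDimensional ℝ E]
  {μ : Measure E} [μ.IsAddHaarMeasure]

lemma setAverage_comp_homothety_le (hW : MeasurableSet W) (hconv : Convex ℝ W) (ha : a ∈ W)
    {f : E → ℝ} (hf0 : ∀ z, 0 ≤ f z) (hf : IntegrableOn f W μ) {t : ℝ} (ht : 0 < t) (ht1 : t ≤ 1) :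
    ⨍ z in W, f (a + t • (z - a)) ∂μ ≤ (t ^ Module.finrank ℝ E)⁻¹ * ⨍ z in W, f z ∂μ := by
  have hmap (z : E) : a + t • (z - a) = (a - t • a) + t • z := by rw [smul_sub]; abel
  have hint : Integrable (fun z => W.indicator f ((a - t • a) + t • z)) μ :=
    (((integrable_indicator_iff hW).2 hf).comp_add_left (a - t • a)).comp_smul ht.ne'
  have hscale : ∫ z in W, f (a + t • (z - a)) ∂μ ≤
      (t ^ Module.finrank ℝ E)⁻¹ * ∫ z in W, f z ∂μ := by
    calc ∫ z in W, f (a + t • (z - a)) ∂μ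
        = ∫ z in W, W.indicator f ((a - t • a) + t • z) ∂μ := by
          refine setIntegral_congr_fun hW fun z hz => ?_
          have hzW : a + t • (z - a) ∈ W := hconv.add_smul_sub_mem ha hz ⟨ht.le, ht1⟩
          simp only [← hmap, indicator_of_mem hzW]
      _ ≤ ∫ z, W.indicator f ((a - t • a) + t • z) ∂μ :=
          setIntegral_le_integral hint (.of_forall fun z => indicator_nonneg (fun _ _ => hf0 _) _)
      _ = (t ^ Module.finrank ℝ E)⁻¹ * ∫ z in W, f z ∂μ := by
          rw [Measure.integral_comp_smul_of_nonneg μ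
              (fun z => W.indicator f ((a - t • a) + z)) t (hR := ht.le),
            integral_add_left_eq_self (W.indicator f), integral_indicator hW, smul_eq_mul]
  simp only [setAverage_eq, smul_eq_mul]
  rw [mul_left_comm]
  gcongr

lemma setAverage_norm_fderiv_comp_homothety_le (hW : IsCompact W) (hμW : μ W ≠ 0)
    (hconv : Convex ℝ W) (ha : a ∈ W) (hu : ContDiff ℝ 1 u) {p : ℝ} (hp : 1 ≤ p) {t : ℝ}
    (ht : t ∈ Ioc (0 : ℝ) 1) :
    ⨍ z in W, ‖fderiv ℝ u (a + t • (z - a))‖ ∂μ ≤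
      t ^ (-(Module.finrank ℝ E / p)) * (⨍ z in W, ‖fderiv ℝ u z‖ ^ p ∂μ) ^ (1 / p) := by
  have ht0 := ht.1
  have hgrad := hu.continuous_fderiv one_ne_zero
  have hline : Continuous fun z => ‖fderiv ℝ u (a + t • (z - a))‖ := by fun_prop
  have hpow {f : E → ℝ} (hf : Continuous f) : IntegrableOn (fun z => f z ^ p) W μ :=
    (hf.rpow_const fun _ => Or.inr (by positivity)).continuousOn.integrableOn_compact hW
  have havg : 0 ≤ ⨍ z in W, ‖fderiv ℝ u z‖ ^ p ∂μ := integral_nonneg fun _ => by positivity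
  calc ⨍ z in W, ‖fderiv ℝ u (a + t • (z - a))‖ ∂μ
      ≤ (⨍ z in W, ‖fderiv ℝ u (a + t • (z - a))‖ ^ p ∂μ) ^ (1 / p) :=
        setAverage_le_setAverage_rpow hp hμW hW.measure_lt_top.ne (fun _ => norm_nonneg _)
          (hline.continuousOn.integrableOn_compact hW) (hpow hline)
    _ ≤ ((t ^ Module.finrank ℝ E)⁻¹ * ⨍ z in W, ‖fderiv ℝ u z‖ ^ p ∂μ) ^ (1 / p) := by
        refine Real.rpow_le_rpow (integral_nonneg fun _ => by positivity) ?_ (by positivity)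
        exact setAverage_comp_homothety_le (f := fun z => ‖fderiv ℝ u z‖ ^ p) hW.measurableSet
          hconv ha (fun _ => by positivity) (hpow hgrad.norm) ht.1 ht.2
    _ = _ := by
        rw [Real.mul_rpow (by positivity) havg, ← Real.rpow_natCast, ← Real.rpow_neg ht0.le,
          ← Real.rpow_mul ht0.le, neg_mul, mul_one_div]

lemma integrable_norm_fderiv_comp_homothety (hW : IsCompact W) (a : E) (hu : ContDiff ℝ 1 u) :
    Integrable (fun q : E × ℝ => ‖fderiv ℝ u (a + q.2 • (q.1 - a))‖)
      ((μ.restrict W).prod (volume.restrict (Ioc 0 1))) := by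
  have := hu.continuous_fderiv one_ne_zero
  rw [Measure.prod_restrict]
  refine IntegrableOn.mono_set (ContinuousOn.integrableOn_compact (hW.prod isCompact_Icc) ?_)
    (prod_mono le_rfl Ioc_subset_Icc_self)
  fun_prop

theorem setAverage_norm_sub_le (hW : IsCompact W) (hμW : μ W ≠ 0) (hconv : Convex ℝ W)
    (ha : a ∈ W) {d : ℝ} (hd : ∀ z ∈ W, ‖z - a‖ ≤ d) (hu : ContDiff ℝ 1 u) {p : ℝ} (hp : 1 ≤ p)
    (hdim : Module.finrank ℝ E < p) :
    ⨍ z in W, ‖u z - u a‖ ∂μ ≤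
      d / (1 - Module.finrank ℝ E / p) * (⨍ z in W, ‖fderiv ℝ u z‖ ^ p ∂μ) ^ (1 / p) := by
  have hexp : Module.finrank ℝ E / p < 1 := (div_lt_one (by positivity)).2 hdim
  have hd0 : 0 ≤ d := (norm_nonneg _).trans (hd a ha)
  set Q := (⨍ z in W, ‖fderiv ℝ u z‖ ^ p ∂μ) ^ (1 / p)
  have hdiff : Continuous fun z => ‖u z - u a‖ := by
    have := hu.continuous
    fun_prop
  have hprod := integrable_norm_fderiv_comp_homothety (μ := μ) hW a hu
  have hrpow : IntervalIntegrable (fun t : ℝ => t ^ (-(Module.finrank ℝ E / p))) volume 0 1 :=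
    intervalIntegral.intervalIntegrable_rpow' (by linarith)
  calc ⨍ z in W, ‖u z - u a‖ ∂μ
      ≤ ⨍ z in W, d * (∫ t in Ioc (0 : ℝ) 1, ‖fderiv ℝ u (a + t • (z - a))‖) ∂μ :=
        setAverage_mono_on (hdiff.continuousOn.integrableOn_compact hW)
          (hprod.integral_prod_left.const_mul d) hW.measurableSet
          fun z hz => norm_sub_le_mul_integral_norm_fderiv hu (hd z hz)
    _ = d * ∫ t in Ioc (0 : ℝ) 1, ⨍ z in W, ‖fderiv ℝ u (a + t • (z - a))‖ ∂μ := by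
        simp only [setAverage_eq, smul_eq_mul, integral_const_mul]
        rw [integral_integral_swap hprod, mul_left_comm]
    _ ≤ d * ∫ t in Ioc (0 : ℝ) 1, t ^ (-(Module.finrank ℝ E / p)) * Q := by
        gcongr ?_ * ?_
        refine setIntegral_mono_on ?_ (hrpow.1.mul_const Q) measurableSet_Ioc fun t ht =>
          setAverage_norm_fderiv_comp_homothety_le hW hμW hconv ha hu hp ht
        simp only [setAverage_eq]
        exact hprod.integral_prod_right.smul (μ.real W)⁻¹
    _ = d / (1 - Module.finrank ℝ E / p) * Q := by
        rw [integral_mul_const, ← intervalIntegral.integral_of_le zero_le_one,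
          integral_rpow (Or.inl (by linarith)), Real.one_rpow, Real.zero_rpow (by linarith)]
        ring

end Morrey

section Oscillation

lemma norm_sub_le_setAverage_add_setAverage {X F : Type*} [TopologicalSpace X] [T2Space X]
    [MeasurableSpace X] [OpensMeasurableSpace X] [NormedAddCommGroup F] {μ : Measure X}
    [IsFiniteMeasureOnCompacts μ] {W : Set X} (hW : IsCompact W) (hμW : μ W ≠ 0) {u : X → F}
    (hu : Continuous u) (a b : F) :
    ‖a - b‖ ≤ ⨍ z in W, ‖u z - a‖ ∂μ + ⨍ z in W, ‖u z - b‖ ∂μ := by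
  have hint (c : F) : IntegrableOn (fun z => ‖u z - c‖) W μ :=
    (hu.sub continuous_const).norm.continuousOn.integrableOn_compact hW
  calc ‖a - b‖ = ⨍ _ in W, ‖a - b‖ ∂μ := (setAverage_const hμW hW.measure_lt_top.ne _).symm
    _ ≤ ⨍ z in W, (‖u z - a‖ + ‖u z - b‖) ∂μ := by
        refine setAverage_mono_on (integrableOn_const hW.measure_lt_top.ne) ((hint a).add (hint b))
          hW.measurableSet fun z _ => ?_
        simpa only [dist_eq_norm] using dist_triangle_left a b (u z)
    _ = ⨍ z in W, ‖u z - a‖ ∂μ + ⨍ z in W, ‖u z - b‖ ∂μ :=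
        integral_add (hint a).to_average (hint b).to_average

lemma rpow_mul_one_sub_log_div_le {q ρ r D : ℝ} (hq : 0 < q) (hρ : 0 < ρ) (hρr : ρ ≤ r)
    (hrD : r ≤ D) :
    ρ ^ q * (1 - Real.log (ρ / D)) ≤ (1 + 1 / q) * (r ^ q * (1 - Real.log (r / D))) := by
  have hr := hρ.trans_le hρr
  have hT := one_le_one_sub_log_div hr hrD
  have hlog : 1 - Real.log (ρ / D) = (1 - Real.log (r / D)) + Real.log (r / ρ) := by
    have hD := hr.trans_le hrD
    rw [Real.log_div hρ.ne' hD.ne', Real.log_div hr.ne' hD.ne', Real.log_div hr.ne' hρ.ne']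
    ring
  calc ρ ^ q * (1 - Real.log (ρ / D))
      ≤ ρ ^ q * ((1 - Real.log (r / D)) + (r / ρ) ^ q / q) := by
        rw [hlog]
        gcongr
        exact Real.log_le_rpow_div (by positivity) hq
    _ = ρ ^ q * (1 - Real.log (r / D)) + 1 / q * r ^ q := by
        rw [Real.div_rpow hr.le hρ.le]
        field_simp
    _ ≤ r ^ q * (1 - Real.log (r / D)) + 1 / q * (r ^ q * (1 - Real.log (r / D))) := by
        gcongr
        exact le_mul_of_one_le_right (by positivity) hT
    _ = _ := by ring

variable {E F : Type*} [NormedAddCommGroup E] [InnerProductSpace ℝ E]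
  [NormedAddCommGroup F] [InnerProductSpace ℝ F] {p : ℝ} {u : E → F} {x : E}
  [MeasurableSpace E] [BorelSpace E] (μ : Measure E)

lemma setAverage_norm_fderiv_rpow_le_energyDensity [IsFiniteMeasureOnCompacts μ] (hp : 1 < p)
    (hu : ContDiff ℝ 1 u) (hu0 : 0 ∉ tsupport u) {W : Set E} (hW : IsCompact W) :
    (⨍ z in W, ‖fderiv ℝ u z‖ ^ p ∂μ) ^ (1 / p) ≤
      (⨍ z in W, energyDensity p u z ∂μ) ^ (1 / p) := by
  refine Real.rpow_le_rpow (integral_nonneg fun _ => by positivity) ?_ (by positivity)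
  have hgrad := continuous_norm_fderiv_rpow (p := p) (by positivity) hu
  exact setAverage_mono_on (hgrad.continuousOn.integrableOn_compact hW)
    ((continuous_energyDensity hp hu hu0).continuousOn.integrableOn_compact hW) hW.measurableSet
    fun z _ => le_add_of_nonneg_right (by positivity)

lemma setAverage_norm_le_energyDensity [IsFiniteMeasureOnCompacts μ] (hp : 1 < p)
    (hu : ContDiff ℝ 1 u) (hu0 : 0 ∉ tsupport u) {W : Set E} (hW : IsCompact W) (hμW : μ W ≠ 0)
    {d : ℝ} (hd : ∀ z ∈ W, ‖z‖ ≤ d) :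
    ⨍ z in W, ‖u z‖ ∂μ ≤ d * (⨍ z in W, energyDensity p u z ∂μ) ^ (1 / p) := by
  have hp0 : 0 < p := by positivity
  have hcont := continuous_energyDensity hp hu hu0
  have hroot0 (z : E) : 0 ≤ energyDensity p u z ^ (1 / p) :=
    Real.rpow_nonneg (energyDensity_nonneg u z) _
  have hroot : IntegrableOn (fun z => energyDensity p u z ^ (1 / p)) W μ :=
    (hcont.rpow_const fun _ => Or.inr (by positivity)).continuousOn.integrableOn_compact hW
  have hpow (z : E) : (energyDensity p u z ^ (1 / p)) ^ p = energyDensity p u z := by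
    rw [one_div, Real.rpow_inv_rpow (energyDensity_nonneg u z) hp0.ne']
  have hjensen := setAverage_le_setAverage_rpow hp.le hμW hW.measure_lt_top.ne hroot0 hroot
    (by simpa only [hpow] using hcont.continuousOn.integrableOn_compact hW)
  simp only [hpow] at hjensen
  obtain ⟨z, hz⟩ := nonempty_of_measure_ne_zero hμW
  have hd0 : 0 ≤ d := (norm_nonneg z).trans (hd z hz)
  calc ⨍ z in W, ‖u z‖ ∂μ ≤ ⨍ z in W, d * energyDensity p u z ^ (1 / p) ∂μ :=
        setAverage_mono_on (hu.continuous.norm.continuousOn.integrableOn_compact hW)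
          (hroot.const_mul d) hW.measurableSet fun z hz =>
            (norm_le_norm_mul_energyDensity_rpow hp0 (image_eq_zero_of_notMem_tsupport hu0) z).trans
              (mul_le_mul_of_nonneg_right (hd z hz) (hroot0 z))
    _ = d * ⨍ z in W, energyDensity p u z ^ (1 / p) ∂μ := integral_const_mul d _
    _ ≤ d * (⨍ z in W, energyDensity p u z ∂μ) ^ (1 / p) := by gcongr

variable [FiniteDimensional ℝ E] [μ.IsAddHaarMeasure]

lemma norm_sub_le_mul_setAverage_energyDensity (hp : 1 < p) (hdim : Module.finrank ℝ E < p)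
    (hu : ContDiff ℝ 1 u) (hu0 : 0 ∉ tsupport u) {r : ℝ} (hr : 0 < r) {y : E}
    (hxy : dist x y ≤ r) :
    ‖u x - u y‖ ≤ 3 / (1 - Module.finrank ℝ E / p) *
      (r * (⨍ z in closedBall x r, energyDensity p u z ∂μ) ^ (1 / p)) := by
  have hW := isCompact_closedBall x r
  have hμW : μ (closedBall x r) ≠ 0 := (measure_closedBall_pos μ x hr).ne'
  have hexp : 0 < 1 - Module.finrank ℝ E / p := sub_pos.2 ((div_lt_one (by positivity)).2 hdim)
  have hnear_x : ∀ z ∈ closedBall x r, ‖z - x‖ ≤ r := fun z hz => mem_closedBall_iff_norm.1 hz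
  have hnear_y : ∀ z ∈ closedBall x r, ‖z - y‖ ≤ 2 * r := by
    intro z hz
    rw [two_mul, ← dist_eq_norm]
    exact (dist_triangle z x y).trans (add_le_add hz hxy)
  have hmorrey {w : E} (hw : w ∈ closedBall x r) {d : ℝ}
      (hd : ∀ z ∈ closedBall x r, ‖z - w‖ ≤ d) := setAverage_norm_sub_le (μ := μ) hW hμW
    (convex_closedBall x r) hw hd hu hp.le hdim
  calc ‖u x - u y‖
      ≤ ⨍ z in closedBall x r, ‖u z - u x‖ ∂μ + ⨍ z in closedBall x r, ‖u z - u y‖ ∂μ :=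
        norm_sub_le_setAverage_add_setAverage hW hμW hu.continuous _ _
    _ ≤ r / (1 - Module.finrank ℝ E / p) *
          (⨍ z in closedBall x r, ‖fderiv ℝ u z‖ ^ p ∂μ) ^ (1 / p) +
        2 * r / (1 - Module.finrank ℝ E / p) *
          (⨍ z in closedBall x r, ‖fderiv ℝ u z‖ ^ p ∂μ) ^ (1 / p) :=
        add_le_add (hmorrey (mem_closedBall_self hr.le) hnear_x)
          (hmorrey (mem_closedBall'.2 hxy) hnear_y)
    _ = 3 / (1 - Module.finrank ℝ E / p) *
          (r * (⨍ z in closedBall x r, ‖fderiv ℝ u z‖ ^ p ∂μ) ^ (1 / p)) := by ring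
    _ ≤ _ := by
        gcongr 3 / (1 - Module.finrank ℝ E / p) * (r * ?_)
        exact setAverage_norm_fderiv_rpow_le_energyDensity μ hp hu hu0 hW

lemma norm_le_mul_setAverage_energyDensity (hp : 1 < p) (hdim : Module.finrank ℝ E < p)
    (hu : ContDiff ℝ 1 u) (hu0 : 0 ∉ tsupport u) {r : ℝ} (hr : 0 < r) (hxr : ‖x‖ ≤ 2 * r) :
    ‖u x‖ ≤ (1 / (1 - Module.finrank ℝ E / p) + 3) *
      (r * (⨍ z in closedBall x r, energyDensity p u z ∂μ) ^ (1 / p)) := by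
  have hW := isCompact_closedBall x r
  have hμW : μ (closedBall x r) ≠ 0 := (measure_closedBall_pos μ x hr).ne'
  have hexp : 0 < 1 - Module.finrank ℝ E / p := sub_pos.2 ((div_lt_one (by positivity)).2 hdim)
  have hnorm : ∀ z ∈ closedBall x r, ‖z‖ ≤ 3 * r := by
    intro z hz
    linarith [norm_le_norm_add_norm_sub' z x, mem_closedBall_iff_norm.1 hz]
  calc ‖u x‖ ≤ ⨍ z in closedBall x r, ‖u z - u x‖ ∂μ + ⨍ z in closedBall x r, ‖u z‖ ∂μ := by
        simpa only [sub_zero] using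
          norm_sub_le_setAverage_add_setAverage (μ := μ) hW hμW hu.continuous (u x) 0
    _ ≤ r / (1 - Module.finrank ℝ E / p) *
          (⨍ z in closedBall x r, ‖fderiv ℝ u z‖ ^ p ∂μ) ^ (1 / p) +
        3 * r * (⨍ z in closedBall x r, energyDensity p u z ∂μ) ^ (1 / p) := by
        gcongr
        · exact setAverage_norm_sub_le hW hμW (convex_closedBall x r) (mem_closedBall_self hr.le)
            (fun z hz => mem_closedBall_iff_norm.1 hz) hu hp.le hdim
        · exact setAverage_norm_le_energyDensity μ hp hu hu0 hW hμW hnorm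
    _ ≤ r / (1 - Module.finrank ℝ E / p) *
          (⨍ z in closedBall x r, energyDensity p u z ∂μ) ^ (1 / p) +
        3 * r * (⨍ z in closedBall x r, energyDensity p u z ∂μ) ^ (1 / p) := by
        gcongr ?_ * ?_ + _
        exact setAverage_norm_fderiv_rpow_le_energyDensity μ hp hu hu0 hW
    _ = _ := by ring

lemma mul_setAverage_closedBall_rpow {f : E → ℝ} (hf : ∀ z, 0 ≤ f z) {r : ℝ} (hr : 0 < r)
    (hp : p ≠ 0) :
    r * (⨍ z in closedBall x r, f z ∂μ) ^ (1 / p) =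
      ((μ.real (closedBall 0 1))⁻¹ * (r ^ (p - Module.finrank ℝ E) *
        ∫ z in closedBall x r, f z ∂μ)) ^ (1 / p) := by
  have havg : 0 ≤ ⨍ z in closedBall x r, f z ∂μ := integral_nonneg hf
  have hroot : (r ^ p) ^ (1 / p) = r := by rw [one_div, Real.rpow_rpow_inv hr.le hp]
  calc r * (⨍ z in closedBall x r, f z ∂μ) ^ (1 / p)
      = (r ^ p * ⨍ z in closedBall x r, f z ∂μ) ^ (1 / p) := by
        rw [Real.mul_rpow (by positivity) havg, hroot]
    _ = _ := by
        rw [setAverage_eq, Measure.addHaar_real_closedBall' μ x hr.le, Real.rpow_sub hr,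
          Real.rpow_natCast, smul_eq_mul, mul_inv]
        ring_nf

variable (F) in
lemma exists_setIntegral_energyDensity_closedBall_le (hp : 1 < p)
    (hdim : Module.finrank ℝ E < p) :
    ∃ C : ℝ, 0 < C ∧ ∀ ⦃u : E → F⦄ ⦃D : ℝ⦄, ContDiff ℝ 1 u →
      0 ∉ tsupport u → tsupport u ⊆ closedBall 0 D → ∀ ⦃x : E⦄, ‖x‖ ≤ D →
        ∀ ⦃r : ℝ⦄, 0 < r → r ≤ ‖x‖ / 2 →
          ∫ z in closedBall x r, energyDensity p u z ∂μ ≤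
            C * (1 - Real.log (r / D)) * hardyDeficit p μ u := by
  obtain ⟨C, hC, hlocal⟩ := exists_setIntegral_energyDensity_le F μ hp hdim
  refine ⟨C, hC, fun u D hu hu0 huD x hxD r hr hrx => ?_⟩
  have hx_pos : 0 < ‖x‖ := by linarith
  have hD := hx_pos.trans_le hxD
  have hdeficit := hardyDeficit_nonneg μ hp hdim hu (.of_support_subset_isCompact
    (isCompact_closedBall 0 D) ((subset_tsupport u).trans huD)) hu0
  calc ∫ z in closedBall x r, energyDensity p u z ∂μ
      ≤ ∫ z in closedBall x (‖x‖ / 2), energyDensity p u z ∂μ :=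
        setIntegral_mono_set ((continuous_energyDensity hp hu hu0).continuousOn.integrableOn_compact
          (isCompact_closedBall _ _)) (.of_forall (energyDensity_nonneg u))
          (closedBall_subset_closedBall hrx).eventuallyLE
    _ ≤ C * (1 - Real.log (‖x‖ / D)) * hardyDeficit p μ u :=
        hlocal hu hu0 huD (norm_pos_iff.1 hx_pos) hxD
    _ ≤ C * (1 - Real.log (r / D)) * hardyDeficit p μ u := by
        gcongr
        linarith

variable (F) in
lemma exists_mul_setAverage_energyDensity_le (hp : 1 < p) (hdim : Module.finrank ℝ E < p) :
    ∃ C : ℝ, 0 < C ∧ ∀ ⦃u : E → F⦄ ⦃D : ℝ⦄, ContDiff ℝ 1 u →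
      0 ∉ tsupport u → tsupport u ⊆ closedBall 0 D → ∀ ⦃x : E⦄, ‖x‖ ≤ D →
        ∀ ⦃r : ℝ⦄, 0 < r → r ≤ ‖x‖ / 2 →
          r * (⨍ z in closedBall x r, energyDensity p u z ∂μ) ^ (1 / p) ≤
            C * (r ^ (p - Module.finrank ℝ E) * (1 - Real.log (r / D)) *
              hardyDeficit p μ u) ^ (1 / p) := by
  obtain ⟨C, hC, hball⟩ := exists_setIntegral_energyDensity_closedBall_le F μ hp hdim
  have hω : 0 < μ.real (closedBall (0 : E) 1) :=
    ENNReal.toReal_pos (measure_closedBall_pos μ 0 one_pos).ne' measure_closedBall_lt_top.ne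
  refine ⟨((μ.real (closedBall (0 : E) 1))⁻¹ * C) ^ (1 / p), by positivity,
    fun u D hu hu0 huD x hxD r hr hrx => ?_⟩
  have hdeficit := hardyDeficit_nonneg μ hp hdim hu (.of_support_subset_isCompact
    (isCompact_closedBall 0 D) ((subset_tsupport u).trans huD)) hu0
  have hT := one_le_one_sub_log_div hr (by linarith : r ≤ D)
  rw [mul_setAverage_closedBall_rpow μ (energyDensity_nonneg u) hr (by positivity),
    ← Real.mul_rpow (by positivity) (by positivity)]
  refine Real.rpow_le_rpow (mul_nonneg (by positivity) (mul_nonneg (by positivity)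
    (integral_nonneg (energyDensity_nonneg u)))) ?_ (by positivity)
  calc (μ.real (closedBall 0 1))⁻¹ * (r ^ (p - Module.finrank ℝ E) *
        ∫ z in closedBall x r, energyDensity p u z ∂μ)
      ≤ (μ.real (closedBall 0 1))⁻¹ * (r ^ (p - Module.finrank ℝ E) *
        (C * (1 - Real.log (r / D)) * hardyDeficit p μ u)) := by
        gcongr
        exact hball hu hu0 huD hxD hr hrx
    _ = _ := by ring

variable (F) in
lemma exists_norm_le_hardyDeficit (hp : 1 < p) (hdim : Module.finrank ℝ E < p) :
    ∃ C : ℝ, 0 < C ∧ ∀ ⦃u : E → F⦄ ⦃D : ℝ⦄, ContDiff ℝ 1 u →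
      0 ∉ tsupport u → tsupport u ⊆ closedBall 0 D → ∀ ⦃x : E⦄, ‖x‖ ≤ D →
        ∀ ⦃r : ℝ⦄, 0 < r → ‖x‖ / 2 ≤ r → r ≤ D →
          ‖u x‖ ≤ C * (r ^ (p - Module.finrank ℝ E) * (1 - Real.log (r / D)) *
            hardyDeficit p μ u) ^ (1 / p) := by
  obtain ⟨C, hC, havg⟩ := exists_mul_setAverage_energyDensity_le F μ hp hdim
  have hexp : 0 < 1 - Module.finrank ℝ E / p := sub_pos.2 ((div_lt_one (by positivity)).2 hdim)
  have hq : 0 < p - Module.finrank ℝ E := sub_pos.2 hdim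
  refine ⟨(1 / (1 - Module.finrank ℝ E / p) + 3) *
    (C * (1 + 1 / (p - Module.finrank ℝ E)) ^ (1 / p)), by positivity,
    fun u D hu hu0 huD x hxD r hr hxr hrD => ?_⟩
  have hdeficit := hardyDeficit_nonneg μ hp hdim hu (.of_support_subset_isCompact
    (isCompact_closedBall 0 D) ((subset_tsupport u).trans huD)) hu0
  have hT := one_le_one_sub_log_div hr hrD
  rcases eq_or_ne x 0 with rfl | hx
  · rw [image_eq_zero_of_notMem_tsupport hu0, norm_zero]
    positivity
  have hρ : 0 < ‖x‖ / 2 := half_pos (norm_pos_iff.2 hx)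
  have hTρ := one_le_one_sub_log_div hρ (hxr.trans hrD)
  rw [mul_assoc, mul_assoc, ← Real.mul_rpow (by positivity) (by positivity)]
  refine (norm_le_mul_setAverage_energyDensity μ hp hdim hu hu0 hρ (by linarith)).trans ?_
  gcongr ?_ * ?_
  refine (havg hu hu0 huD hxD hρ le_rfl).trans ?_
  rw [← mul_assoc (1 + _)]
  gcongr ?_ * (?_ * _) ^ _
  exact rpow_mul_one_sub_log_div_le hq hρ hxr hrD

variable (F) in
theorem exists_norm_sub_le_hardyDeficit (hp : 1 < p) (hdim : Module.finrank ℝ E < p) :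
    ∃ C : ℝ, 0 < C ∧ ∀ ⦃u : E → F⦄ ⦃D : ℝ⦄, ContDiff ℝ 1 u →
      0 ∉ tsupport u → tsupport u ⊆ closedBall 0 D →
        ∀ ⦃x y : E⦄, x ≠ y → ‖x‖ ≤ D → ‖y‖ ≤ D → dist x y ≤ D →
          ‖u x - u y‖ ≤ C * (dist x y ^ (p - Module.finrank ℝ E) *
            (1 - Real.log (dist x y / D)) * hardyDeficit p μ u) ^ (1 / p) := by
  obtain ⟨A, hA, havg⟩ := exists_mul_setAverage_energyDensity_le F μ hp hdim
  obtain ⟨B, hB, hfar⟩ := exists_norm_le_hardyDeficit F μ hp hdim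
  have hexp : 0 < 1 - Module.finrank ℝ E / p := sub_pos.2 ((div_lt_one (by positivity)).2 hdim)
  refine ⟨3 / (1 - Module.finrank ℝ E / p) * A + 2 * B, by positivity,
    fun u D hu hu0 huD x y hxy hxD hyD hxyD => ?_⟩
  have hdeficit := hardyDeficit_nonneg μ hp hdim hu (.of_support_subset_isCompact
    (isCompact_closedBall 0 D) ((subset_tsupport u).trans huD)) hu0
  have hr := dist_pos.2 hxy
  have hT := one_le_one_sub_log_div hr hxyD
  have hnear ⦃v w : E⦄ (hvD : ‖v‖ ≤ D) (hvw : v ≠ w) (hdist : dist v w ≤ ‖v‖ / 2) :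
      ‖u v - u w‖ ≤ 3 / (1 - Module.finrank ℝ E / p) * A * (dist v w ^ (p - Module.finrank ℝ E) *
        (1 - Real.log (dist v w / D)) * hardyDeficit p μ u) ^ (1 / p) := by
    have hr := dist_pos.2 hvw
    rw [mul_assoc]
    refine (norm_sub_le_mul_setAverage_energyDensity μ hp hdim hu hu0 hr le_rfl).trans ?_
    gcongr ?_ * ?_
    exact havg hu hu0 huD hvD hr hdist
  rw [add_mul]
  rcases le_total (dist x y) (‖x‖ / 2) with hx | hx
  · exact le_add_of_le_of_nonneg (hnear hxD hxy hx) (by positivity)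
  rcases le_total (dist x y) (‖y‖ / 2) with hy | hy
  · rw [dist_comm] at hy
    rw [norm_sub_rev, dist_comm]
    rw [dist_comm] at hT hr
    exact le_add_of_le_of_nonneg (hnear hyD hxy.symm hy) (by positivity)
  · refine le_add_of_nonneg_of_le (by positivity) ?_
    rw [two_mul, add_mul]
    exact (norm_sub_le _ _).trans
      (add_le_add (hfar hu hu0 huD hxD hr hx hxyD) (hfar hu hu0 huD hyD hr hy hxyD))

end Oscillation

section General

variable {E F : Type*} [NormedAddCommGroup E] [InnerProductSpace ℝ E]
  [MeasurableSpace E] [NormedAddCommGroup F] [InnerProductSpace ℝ F] {p : ℝ}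

lemma setIntegral_sub_setIntegral_eq_hardyDeficit {μ : Measure E} (hp : p ≠ 0) {Ω : Set E}
    {u : E → F} (hu : tsupport u ⊆ Ω) :
    ∫ z in Ω, ‖fderiv ℝ u z‖ ^ p ∂μ -
        ((p - Module.finrank ℝ E) / p) ^ p * ∫ z in Ω, ‖u z‖ ^ p / ‖z‖ ^ p ∂μ =
      hardyDeficit p μ u := by
  rw [hardyDeficit, setIntegral_eq_integral_of_forall_compl_eq_zero fun z hz => ?_,
    setIntegral_eq_integral_of_forall_compl_eq_zero fun z hz => ?_]
  · simp [image_eq_zero_of_notMem_tsupport fun h => hz (hu h), hp]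
  · simp [(notMem_tsupport_iff_eventuallyEq.1 fun h => hz (hu h)).fderiv_eq, hp]

variable (F) in
theorem hardy_morrey_origin_general [BorelSpace E] [FiniteDimensional ℝ E] [Nontrivial E]
    (μ : Measure E) [μ.IsAddHaarMeasure] (hp : Module.finrank ℝ E < p) :
    ∃ C : ℝ, 0 < C ∧ ∀ Ω : Set E, Bornology.IsBounded Ω → 0 ∈ Ω →
      ∀ u : E → F, ContDiff ℝ 1 u → tsupport u ⊆ Ω \ {0} → ∀ x ∈ Ω, ∀ y ∈ Ω, x ≠ y →
        ‖u x - u y‖ * ((1 - Real.log (dist x y / diam Ω))⁻¹) ^ (1 / p) ≤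
          C * dist x y ^ (1 - Module.finrank ℝ E / p) *
            (∫ z in Ω, ‖fderiv ℝ u z‖ ^ p ∂μ -
              ((p - Module.finrank ℝ E) / p) ^ p *
                ∫ z in Ω, ‖u z‖ ^ p / ‖z‖ ^ p ∂μ) ^ (1 / p) := by
  have hp1 : 1 < p := lt_of_le_of_lt (mod_cast Module.finrank_pos) hp
  obtain ⟨C, hC, hosc⟩ := exists_norm_sub_le_hardyDeficit F μ hp1 hp
  refine ⟨C, hC, fun Ω hΩ h0 u hu huΩ x hx y hy hxy => ?_⟩
  have hdiam : ∀ z ∈ Ω, ‖z‖ ≤ diam Ω := fun z hz => by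
    simpa only [dist_zero_right] using dist_le_diam_of_mem hΩ hz h0
  have hu0 : 0 ∉ tsupport u := fun h => (huΩ h).2 rfl
  have huD : tsupport u ⊆ closedBall 0 (diam Ω) := fun z hz =>
    mem_closedBall_zero_iff.2 (hdiam z (huΩ hz).1)
  have hr := dist_pos.2 hxy
  have hrD := dist_le_diam_of_mem hΩ hx hy
  have hT := one_le_one_sub_log_div hr hrD
  have hdeficit := hardyDeficit_nonneg μ hp1 hp hu (.of_support_subset_isCompact
    (isCompact_closedBall 0 _) ((subset_tsupport u).trans huD)) hu0
  rw [setIntegral_sub_setIntegral_eq_hardyDeficit (by positivity) (huΩ.trans sdiff_subset),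
    Real.inv_rpow (by positivity), ← div_eq_mul_inv, div_le_iff₀ (by positivity)]
  calc ‖u x - u y‖ ≤ C * (dist x y ^ (p - Module.finrank ℝ E) *
          (1 - Real.log (dist x y / diam Ω)) * hardyDeficit p μ u) ^ (1 / p) :=
        hosc hu hu0 huD hxy (hdiam x hx) (hdiam y hy) hrD
    _ = C * dist x y ^ (1 - Module.finrank ℝ E / p) * hardyDeficit p μ u ^ (1 / p) *
          (1 - Real.log (dist x y / diam Ω)) ^ (1 / p) := by
        rw [Real.mul_rpow (by positivity) hdeficit, Real.mul_rpow (by positivity) (by positivity),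
          ← Real.rpow_mul hr.le, mul_one_div, sub_div, div_self (by positivity)]
        ring

end General

/-- optimal Hardy–Morrey inequality, distance to the origin. -/
theorem hardy_morrey_origin (n : ℕ) (hn : 1 ≤ n) (p : ℝ) (hp : (n : ℝ) < p) :
    ∃ B C : ℝ, 1 ≤ B ∧ 0 < C ∧
      ∀ Ω : Set (EuclideanSpace ℝ (Fin n)), IsOpen Ω → IsConnected Ω →
        Bornology.IsBounded Ω → (0 : EuclideanSpace ℝ (Fin n)) ∈ Ω →
        ∀ u : EuclideanSpace ℝ (Fin n) → ℝ, ContDiff ℝ (⊤ : ℕ∞) u →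
          HasCompactSupport u → tsupport u ⊆ Ω \ {0} →
          ∀ x ∈ Ω, ∀ y ∈ Ω, x ≠ y →
            |u x - u y| * ((1 - Real.log (dist x y / (B * Metric.diam Ω)))⁻¹) ^ (1 / p) ≤
              C * dist x y ^ (1 - (n : ℝ) / p) *
                ((∫ z in Ω, ‖fderiv ℝ u z‖ ^ p)
                  - ((p - n) / p) ^ p * ∫ z in Ω, |u z| ^ p / ‖z‖ ^ p) ^ (1 / p) := by
  have : Nonempty (Fin n) := Fin.pos_iff_nonempty.1 hn
  obtain ⟨C, hC, hmain⟩ := hardy_morrey_origin_general (E := EuclideanSpace ℝ (Fin n))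
    ℝ volume (p := p) (by rwa [finrank_euclideanSpace_fin])
  refine ⟨1, C, le_rfl, hC, fun Ω _ _ hΩ h0 u hu _ huΩ x hx y hy hxy => ?_⟩
  simpa only [one_mul, finrank_euclideanSpace_fin, Real.norm_eq_abs] using
    hmain Ω hΩ h0 u (hu.of_le (mod_cast le_top)) huΩ x hx y hy hxy
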